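/- arXiv:1507.00438 — 10 statements merged into one kernel-verified Lean document; each statement's English description precedes it below -/
import Mathlib

section
/- (Lemma 1, existential form.) Let f₁, f₂ : ℝ^d → ℝ be continuously differentiable convex functions, h₁, h₂ : ℝ^d → ℝ convex, x⋆ ∈ ℝ^d, and H a symmetric positive definite linear map. Then x⋆ is a stationary point of F = f₁ − f₂ + h₁ − h₂ (i.e., there exist z₁ ∈ ∂h₁(x⋆) and z₂ ∈ ∂h₂(x⋆) with ∇f₁(x⋆) − ∇f₂(x⋆) + z₁ − z₂ = 0) if and only if there exists z₂ ∈ ∂h₂(x⋆) such that the unique minimizer over d ∈ ℝ^d of ⟨v, d⟩ + ½⟨H d, d⟩ + h₁(x⋆ + d), with v = ∇f₁(x⋆) − ∇f₂(x⋆) − z₂, equals 0. -/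
open RealInnerProductSpace

theorem stmt_5 (d : ℕ) (hd : 1 ≤ d)
    (f₁ f₂ h₁ h₂ : EuclideanSpace ℝ (Fin d) → ℝ)
    (hf₁ : ContDiff ℝ 1 f₁) (hf₂ : ContDiff ℝ 1 f₂)
    (hf₁c : ConvexOn ℝ Set.univ f₁) (hf₂c : ConvexOn ℝ Set.univ f₂)
    (hh₁ : ConvexOn ℝ Set.univ h₁) (hh₂ : ConvexOn ℝ Set.univ h₂)
    (xstar : EuclideanSpace ℝ (Fin d))
    (H : EuclideanSpace ℝ (Fin d) →ₗ[ℝ] EuclideanSpace ℝ (Fin d))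
    (hsym : ∀ u w : EuclideanSpace ℝ (Fin d), ⟪H u, w⟫ = ⟪u, H w⟫)
    (hpd : ∀ u : EuclideanSpace ℝ (Fin d), u ≠ 0 → 0 < ⟪H u, u⟫) :
    (∃ z₁ z₂ : EuclideanSpace ℝ (Fin d),
        (∀ y, h₁ y ≥ h₁ xstar + ⟪z₁, y - xstar⟫) ∧
        (∀ y, h₂ y ≥ h₂ xstar + ⟪z₂, y - xstar⟫) ∧
        gradient f₁ xstar - gradient f₂ xstar + z₁ - z₂ = 0)
    ↔ (∃ z₂ : EuclideanSpace ℝ (Fin d),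
        (∀ y, h₂ y ≥ h₂ xstar + ⟪z₂, y - xstar⟫) ∧
        ∃ Δxstar : EuclideanSpace ℝ (Fin d),
          (∀ dd : EuclideanSpace ℝ (Fin d),
            ⟪gradient f₁ xstar - gradient f₂ xstar - z₂, Δxstar⟫
              + (1/2) * ⟪H Δxstar, Δxstar⟫ + h₁ (xstar + Δxstar)
            ≤ ⟪gradient f₁ xstar - gradient f₂ xstar - z₂, dd⟫
              + (1/2) * ⟪H dd, dd⟫ + h₁ (xstar + dd)) ∧
          Δxstar = 0) := by
  have hq : ∀ u : EuclideanSpace ℝ (Fin d), 0 ≤ ⟪H u, u⟫ := by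
    intro u
    by_cases hu : u = 0
    · simp [hu]
    · exact (hpd u hu).le
  constructor
  · rintro ⟨z₁, z₂, h1, h2, h3⟩
    refine ⟨z₂, h2, 0, ?_, rfl⟩
    intro dd
    have hv : gradient f₁ xstar - gradient f₂ xstar - z₂ = -z₁ := by
      rw [← sub_eq_zero, ← h3]; abel
    rw [hv]
    have h := h1 (xstar + dd)
    rw [add_sub_cancel_left] at h
    have h' := hq dd
    simp only [inner_zero_right, add_zero, mul_zero, zero_add, inner_neg_left]
    linarith
  · rintro ⟨z₂, h2, Δ, hmin, rfl⟩
    refine ⟨-(gradient f₁ xstar - gradient f₂ xstar - z₂), z₂, ?_, h2, by abel⟩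
    generalize gradient f₁ xstar - gradient f₂ xstar - z₂ = v at hmin
    intro y
    rw [inner_neg_left]
    by_contra hcon
    have hqu := hq (y - xstar)
    have key : ∀ t : ℝ, 0 < t → t ≤ 1 →
        h₁ xstar ≤ ⟪v, y - xstar⟫ + t / 2 * ⟪H (y - xstar), y - xstar⟫ + h₁ y := by
      intro t ht ht1
      have h := hmin (t • (y - xstar))
      have hc := hh₁.2 (Set.mem_univ xstar) (Set.mem_univ y)
        (sub_nonneg.2 ht1) ht.le (by ring)
      have he : (1 - t) • xstar + t • y = xstar + t • (y - xstar) := by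
        module
      rw [he] at hc
      simp only [inner_zero_right, add_zero, mul_zero, zero_add, map_smul,
        real_inner_smul_left, real_inner_smul_right, smul_eq_mul] at h hc
      refine le_of_mul_le_mul_left ?_ ht
      linarith
    generalize ⟪H (y - xstar), y - xstar⟫ = q at *
    generalize ⟪v, y - xstar⟫ = p at *
    have ha : 0 < h₁ xstar - p - h₁ y := by linarith
    generalize hae : h₁ xstar - p - h₁ y = a at ha
    have haq : 0 < a + q := by linarith
    have hk := key (a / (a + q)) (by positivity) ((div_le_one haq).2 (by linarith))
    have h5 : a ≤ a / (a + q) / 2 * q := by linarith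
    have h6 : a / (a + q) / 2 * q = a * q / (2 * (a + q)) := by
      field_simp
    rw [h6, le_div_iff₀ (by positivity)] at h5
    nlinarith [mul_pos ha haq, mul_pos ha ha]
end

section
/- (Lemma 2, convexity estimate.) Let f₁ : ℝ^d → ℝ be any function, f₂ : ℝ^d → ℝ convex and differentiable, and h₁, h₂ : ℝ^d → ℝ convex; set F = f₁ − f₂ + h₁ − h₂. Then for every x, Δ ∈ ℝ^d, every t ∈ [0, 1], and every z_{h₂} ∈ ∂h₂(x), one has F(x + tΔ) − F(x) ≤ f₁(x + tΔ) − f₁(x) + t·(h₁(x + Δ) − h₁(x)) − t·⟨∇f₂(x) + z_{h₂}, Δ⟩. -/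
open RealInnerProductSpace

theorem stmt_6 (d : ℕ) (hd : 1 ≤ d)
    (f₁ f₂ h₁ h₂ : EuclideanSpace ℝ (Fin d) → ℝ)
    (hf₂c : ConvexOn ℝ Set.univ f₂) (hf₂ : Differentiable ℝ f₂)
    (hh₁ : ConvexOn ℝ Set.univ h₁) (hh₂ : ConvexOn ℝ Set.univ h₂)
    (F : EuclideanSpace ℝ (Fin d) → ℝ)
    (hF : ∀ x, F x = f₁ x - f₂ x + h₁ x - h₂ x) :
    ∀ (x Δ : EuclideanSpace ℝ (Fin d)) (t : ℝ), t ∈ Set.Icc (0:ℝ) 1 →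
      ∀ zh₂ : EuclideanSpace ℝ (Fin d),
        (∀ y, h₂ y ≥ h₂ x + ⟪zh₂, y - x⟫) →
        F (x + t • Δ) - F x
          ≤ f₁ (x + t • Δ) - f₁ x + t * (h₁ (x + Δ) - h₁ x)
            - t * ⟪gradient f₂ x + zh₂, Δ⟫ := by
  intro x Δ t ht zh₂ hz
  obtain ⟨ht0, ht1⟩ := ht
  have e1 : t * ⟪zh₂, Δ⟫ ≤ h₂ (x + t • Δ) - h₂ x := by
    have h := hz (x + t • Δ)
    rw [add_sub_cancel_left, inner_smul_right] at h
    linarith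
  have e2 : h₁ (x + t • Δ) - h₁ x ≤ t * (h₁ (x + Δ) - h₁ x) := by
    have h := hh₁.2 (Set.mem_univ x) (Set.mem_univ (x + Δ)) (sub_nonneg.2 ht1) ht0 (by ring)
    have e : (1 - t) • x + t • (x + Δ) = x + t • Δ := by module
    rw [e] at h
    simp only [smul_eq_mul] at h
    linarith
  have e3 : t * ⟪gradient f₂ x, Δ⟫ ≤ f₂ (x + t • Δ) - f₂ x := by
    have hc := hf₂c.comp_affineMap (AffineMap.lineMap (k := ℝ) x (x + t • Δ))
    have hg : HasFDerivAt f₂ (fderiv ℝ f₂ x) (AffineMap.lineMap x (x + t • Δ) (0:ℝ)) := by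
      rw [AffineMap.lineMap_apply_zero]
      exact (hf₂ x).hasFDerivAt
    have hd' := hg.comp_hasDerivAt (0:ℝ) AffineMap.hasDerivAt_lineMap
    have h := hc.le_slope_of_hasDerivAt (x := 0) (y := 1) (by simp) (by simp) one_pos hd'
    simp [slope_def_field] at h
    have hgr : ⟪gradient f₂ x, Δ⟫ = fderiv ℝ f₂ x Δ := by
      simp [gradient]
    rw [hgr]
    linarith
  rw [hF, hF, inner_add_left]
  linarith
end

section
/- (Key descent inequality for the search direction.) Let h₁ : ℝ^d → ℝ be convex, H : ℝ^d → ℝ^d a symmetric positive definite linear map, x, v ∈ ℝ^d, and let Δx be a minimizer over d ∈ ℝ^d of ⟨v, d⟩ + ½⟨H d, d⟩ + h₁(x + d). Then for every t ∈ [0, 1], ⟨v, Δx⟩ + h₁(x + Δx) − h₁(x) ≤ −½(1 + t)·⟨H Δx, Δx⟩; in particular (t = 1), ⟨v, Δx⟩ + h₁(x + Δx) − h₁(x) ≤ −⟨H Δx, Δx⟩. -/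
open RealInnerProductSpace

theorem stmt_7 (d : ℕ) (hd : 1 ≤ d)
    (h₁ : EuclideanSpace ℝ (Fin d) → ℝ) (hh₁ : ConvexOn ℝ Set.univ h₁)
    (H : EuclideanSpace ℝ (Fin d) →ₗ[ℝ] EuclideanSpace ℝ (Fin d))
    (hsym : ∀ u w : EuclideanSpace ℝ (Fin d), ⟪H u, w⟫ = ⟪u, H w⟫)
    (hpd : ∀ u : EuclideanSpace ℝ (Fin d), u ≠ 0 → 0 < ⟪H u, u⟫)
    (x v Δx : EuclideanSpace ℝ (Fin d))
    (hmin : ∀ dd : EuclideanSpace ℝ (Fin d),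
      ⟪v, Δx⟫ + (1/2) * ⟪H Δx, Δx⟫ + h₁ (x + Δx)
        ≤ ⟪v, dd⟫ + (1/2) * ⟪H dd, dd⟫ + h₁ (x + dd)) :
    (∀ t : ℝ, t ∈ Set.Icc (0:ℝ) 1 →
      ⟪v, Δx⟫ + h₁ (x + Δx) - h₁ x ≤ -(1/2) * (1 + t) * ⟪H Δx, Δx⟫) ∧
    ⟪v, Δx⟫ + h₁ (x + Δx) - h₁ x ≤ -⟪H Δx, Δx⟫ := by
  have hQ : 0 ≤ ⟪H Δx, Δx⟫ := by
    by_cases h : Δx = 0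
    · simp [h]
    · exact (hpd _ h).le
  have key : ∀ s : ℝ, 0 ≤ s → s < 1 →
      ⟪v, Δx⟫ + h₁ (x + Δx) - h₁ x + (1/2) * ⟪H Δx, Δx⟫ * (1 + s) ≤ 0 := by
    intro s hs hs1
    have h1 := hmin (s • Δx)
    have h2 := hh₁.2 (Set.mem_univ x) (Set.mem_univ (x + Δx))
      (sub_nonneg.2 hs1.le) hs (by ring)
    have h3 : (1 - s) • x + s • (x + Δx) = x + s • Δx := by module
    rw [h3] at h2
    simp only [map_smul, real_inner_smul_left, real_inner_smul_right, smul_eq_mul] at h1 h2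
    have h4 : (1 - s) * (⟪v, Δx⟫ + h₁ (x + Δx) - h₁ x
        + (1/2) * ⟪H Δx, Δx⟫ * (1 + s)) ≤ 0 := by
      linarith
    by_contra hc
    push Not at hc
    have := mul_pos (sub_pos.2 hs1) hc
    linarith
  generalize ⟪H Δx, Δx⟫ = Q at *
  generalize ⟪v, Δx⟫ + h₁ (x + Δx) - h₁ x = A at *
  have main : A ≤ -Q := by
    by_contra hc
    push Not at hc
    have h0 := key 0 le_rfl one_pos
    have hd0 : 0 < (A + Q) / (Q + 1) := div_pos (by linarith) (by linarith)
    have hd1 : (A + Q) / (Q + 1) ≤ 1 := (div_le_one (by linarith)).2 (by linarith)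
    have h1 := key (1 - (A + Q) / (Q + 1)) (by linarith) (by linarith)
    have h2 : (A + Q) / (Q + 1) * (Q + 1) = A + Q := div_mul_cancel₀ _ (by linarith)
    generalize (A + Q) / (Q + 1) = e at *
    nlinarith [mul_nonneg hd0.le hQ]
  refine ⟨fun t ht => ?_, main⟩
  nlinarith [mul_nonneg hQ (sub_nonneg.2 ht.2)]
end

section
/- (Smooth descent estimate.) Let f₁ : ℝ^d → ℝ be differentiable with L-Lipschitz gradient (‖∇f₁(x) − ∇f₁(y)‖ ≤ L‖x − y‖ for all x, y), f₂ : ℝ^d → ℝ convex differentiable, h₁, h₂ : ℝ^d → ℝ convex; set F = f₁ − f₂ + h₁ − h₂. Fix x, Δ ∈ ℝ^d and z_{h₂} ∈ ∂h₂(x), let v = ∇f₁(x) − ∇f₂(x) − z_{h₂} and D = ⟨v, Δ⟩ + h₁(x + Δ) − h₁(x). Then for every t ∈ [0, 1], F(x + tΔ) − F(x) ≤ t·( (tL/2)·‖Δ‖² + D ). -/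
open RealInnerProductSpace

lemma hasDerivAt_line_aux {d : ℕ} (f : EuclideanSpace ℝ (Fin d) → ℝ) (hf : Differentiable ℝ f)
    (x Δ : EuclideanSpace ℝ (Fin d)) (s : ℝ) :
    HasDerivAt (fun s : ℝ => f (x + s • Δ)) (inner ℝ (gradient f (x + s • Δ)) Δ) s := by
  have h1 : HasDerivAt (fun s : ℝ => x + s • Δ) Δ s := by
    simpa using ((hasDerivAt_id s).smul_const Δ).const_add x
  have h2 := (hf (x + s • Δ)).hasFDerivAt.comp_hasDerivAt s h1
  refine HasDerivAt.congr_deriv h2 ?_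
  simp

theorem stmt_8 (d : ℕ) (hd : 1 ≤ d)
    (f₁ f₂ h₁ h₂ : EuclideanSpace ℝ (Fin d) → ℝ) (L : ℝ)
    (hf₁ : Differentiable ℝ f₁)
    (hlip : ∀ x y : EuclideanSpace ℝ (Fin d),
      ‖gradient f₁ x - gradient f₁ y‖ ≤ L * ‖x - y‖)
    (hf₂c : ConvexOn ℝ Set.univ f₂) (hf₂ : Differentiable ℝ f₂)
    (hh₁ : ConvexOn ℝ Set.univ h₁) (hh₂ : ConvexOn ℝ Set.univ h₂)
    (F : EuclideanSpace ℝ (Fin d) → ℝ)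
    (hF : ∀ x, F x = f₁ x - f₂ x + h₁ x - h₂ x)
    (x Δ zh₂ : EuclideanSpace ℝ (Fin d))
    (hzh₂ : ∀ y, h₂ y ≥ h₂ x + ⟪zh₂, y - x⟫)
    (v : EuclideanSpace ℝ (Fin d))
    (hv : v = gradient f₁ x - gradient f₂ x - zh₂)
    (D : ℝ) (hD : D = ⟪v, Δ⟫ + h₁ (x + Δ) - h₁ x) :
    ∀ t : ℝ, t ∈ Set.Icc (0:ℝ) 1 →
      F (x + t • Δ) - F x ≤ t * ((t * L / 2) * ‖Δ‖ ^ 2 + D) := by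
  intro t ht
  obtain ⟨ht0, ht1⟩ := ht
  have d1 := hasDerivAt_line_aux f₁ hf₁ x Δ
  have e1 : f₁ (x + t • Δ) ≤ f₁ x + t * ⟪gradient f₁ x, Δ⟫ + t ^ 2 * (L / 2 * ‖Δ‖ ^ 2) := by
    have hg : ∀ s : ℝ, HasDerivAt
        (fun s : ℝ => f₁ (x + s • Δ) - s * ⟪gradient f₁ x, Δ⟫ - s ^ 2 * (L / 2 * ‖Δ‖ ^ 2))
        (⟪gradient f₁ (x + s • Δ), Δ⟫ - ⟪gradient f₁ x, Δ⟫ - s * L * ‖Δ‖ ^ 2) s := by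
      intro s
      have := ((d1 s).sub ((hasDerivAt_id s).mul_const ⟪gradient f₁ x, Δ⟫)).sub
        ((hasDerivAt_pow 2 s).mul_const (L / 2 * ‖Δ‖ ^ 2))
      refine this.congr_deriv ?_
      norm_num
      ring
    have hanti := antitoneOn_of_deriv_nonpos (convex_Ici (0 : ℝ))
      (fun s _ => (hg s).continuousAt.continuousWithinAt)
      (fun s _ => (hg s).differentiableAt.differentiableWithinAt)
      (by
        intro s hs
        rw [interior_Ici] at hs
        have hs' : 0 < s := hs
        rw [(hg s).deriv, ← inner_sub_left]
        have a := real_inner_le_norm (gradient f₁ (x + s • Δ) - gradient f₁ x) Δ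
        have b := hlip (x + s • Δ) x
        rw [add_sub_cancel_left, norm_smul, Real.norm_of_nonneg hs'.le] at b
        have c := mul_le_mul_of_nonneg_right b (norm_nonneg Δ)
        nlinarith)
    have := hanti (Set.mem_Ici.2 le_rfl) (Set.mem_Ici.2 ht0) ht0
    simp at this ⊢
    linarith
  have e2 : f₂ x + t * ⟪gradient f₂ x, Δ⟫ ≤ f₂ (x + t • Δ) := by
    rcases ht0.eq_or_lt with h | h
    · simp [← h]
    have d2 := hasDerivAt_line_aux f₂ hf₂ x Δ 0
    have hc : ConvexOn ℝ Set.univ (fun s : ℝ => f₂ (x + s • Δ)) := by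
      refine ⟨convex_univ, fun a _ b _ p q hp hq hpq => ?_⟩
      have := hf₂c.2 (Set.mem_univ (x + a • Δ)) (Set.mem_univ (x + b • Δ)) hp hq hpq
      convert this using 2
      have : x = (p + q) • x := by rw [hpq, one_smul]
      nth_rewrite 1 [this]
      simp only [smul_eq_mul]
      module
    have := hc.le_slope_of_hasDerivAt (Set.mem_univ 0) (Set.mem_univ t) h d2
    rw [slope_def_field, le_div_iff₀ (by linarith)] at this
    simp at this ⊢
    linarith
  have e3 : h₁ (x + t • Δ) ≤ h₁ x + t * (h₁ (x + Δ) - h₁ x) := by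
    have := hh₁.2 (Set.mem_univ x) (Set.mem_univ (x + Δ)) (sub_nonneg.2 ht1) ht0 (by ring)
    have e : (1 - t) • x + t • (x + Δ) = x + t • Δ := by module
    rw [e] at this
    simp only [smul_eq_mul] at this
    linarith
  have e4 := hzh₂ (x + t • Δ)
  rw [add_sub_cancel_left, real_inner_smul_right] at e4
  rw [hF, hF, hD, hv, inner_sub_left, inner_sub_left]
  linarith
end

section
/- (Lemma 3: existence of admissible step sizes.) Let f₁ : ℝ^d → ℝ be differentiable with L-Lipschitz gradient (L > 0), f₂ : ℝ^d → ℝ convex differentiable, h₁, h₂ : ℝ^d → ℝ convex; set F = f₁ − f₂ + h₁ − h₂. Let H be a symmetric positive definite linear map with ⟨Hu, u⟩ ≥ m‖u‖² for all u, where m > 0, fix x ∈ ℝ^d and z_{h₂} ∈ ∂h₂(x), set v = ∇f₁(x) − ∇f₂(x) − z_{h₂}, let Δx be a minimizer over d ∈ ℝ^d of ⟨v, d⟩ + ½⟨H d, d⟩ + h₁(x + d), and let D = ⟨v, Δx⟩ + h₁(x + Δx) − h₁(x). Then for every α ∈ (0, 1) and every t with 0 < t ≤ min(1, 2m(1 −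 α)/L), the sufficient descent condition F(x + tΔx) − F(x) ≤ α·t·D holds. -/
open RealInnerProductSpace

theorem line_hasDerivAt {d : ℕ} (f : EuclideanSpace ℝ (Fin d) → ℝ) (hf : Differentiable ℝ f)
    (x w : EuclideanSpace ℝ (Fin d)) (s : ℝ) :
    HasDerivAt (fun s : ℝ => f (x + s • w)) ⟪gradient f (x + s • w), w⟫ s := by
  have h1 := (hf (x + s • w)).hasGradientAt.hasFDerivAt
  have h2 : HasDerivAt (fun s : ℝ => x + s • w) w s := by
    simpa using ((hasDerivAt_id s).smul_const w).const_add x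
  exact (h1.comp_hasDerivAt s h2).congr_deriv (by simp)

theorem descent_aux {d : ℕ} (f : EuclideanSpace ℝ (Fin d) → ℝ) (hf : Differentiable ℝ f)
    (L : ℝ) (hlip : ∀ x y : EuclideanSpace ℝ (Fin d),
      ‖gradient f x - gradient f y‖ ≤ L * ‖x - y‖)
    (x w : EuclideanSpace ℝ (Fin d)) (t : ℝ) (ht : 0 < t) :
    f (x + t • w) ≤ f x + t * ⟪gradient f x, w⟫ + L * t ^ 2 / 2 * ‖w‖ ^ 2 := by
  have hB : ∀ s : ℝ, HasDerivAt
      (fun s : ℝ => f x + s * ⟪gradient f x, w⟫ + L * s ^ 2 / 2 * ‖w‖ ^ 2)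
      (⟪gradient f x, w⟫ + L * s * ‖w‖ ^ 2) s := by
    intro s
    have h1 := ((hasDerivAt_id s).mul_const ⟪gradient f x, w⟫).const_add (f x)
    have h2 := ((((hasDerivAt_id s).pow 2).const_mul L).div_const 2).mul_const (‖w‖ ^ 2)
    refine (h1.add h2).congr_deriv ?_
    simp only [id_eq, Nat.cast_ofNat, Nat.add_one_sub_one, pow_one]
    ring
  refine image_le_of_deriv_right_le_deriv_boundary (a := 0) (b := t)
    (f := fun s : ℝ => f (x + s • w))
    (fun s _ => (line_hasDerivAt f hf x w s).continuousAt.continuousWithinAt)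
    (fun s _ => (line_hasDerivAt f hf x w s).hasDerivWithinAt) (by simp)
    (fun s _ => (hB s).continuousAt.continuousWithinAt)
    (fun s _ => (hB s).hasDerivWithinAt) ?_ ⟨ht.le, le_rfl⟩
  intro s hs
  have h1 := real_inner_le_norm (gradient f (x + s • w) - gradient f x) w
  have h2 := hlip (x + s • w) x
  rw [add_sub_cancel_left, norm_smul, Real.norm_of_nonneg hs.1] at h2
  have h3 := mul_le_mul_of_nonneg_right h2 (norm_nonneg w)
  rw [inner_sub_left] at h1
  linarith

theorem convex_aux {d : ℕ} (f : EuclideanSpace ℝ (Fin d) → ℝ) (hf : Differentiable ℝ f)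
    (hc : ConvexOn ℝ Set.univ f)
    (x w : EuclideanSpace ℝ (Fin d)) (t : ℝ) (ht : 0 < t) :
    f x + t * ⟪gradient f x, w⟫ ≤ f (x + t • w) := by
  have hg : ConvexOn ℝ Set.univ (fun s : ℝ => f (x + s • w)) := by
    refine ⟨convex_univ, fun a _ b _ p q hp hq hpq => ?_⟩
    have := hc.2 (Set.mem_univ (x + a • w)) (Set.mem_univ (x + b • w)) hp hq hpq
    convert this using 2
    rw [← eq_sub_iff_add_eq'] at hpq
    subst hpq
    simp only [smul_eq_mul]
    module
  have h := hg.le_slope_of_hasDerivAt (Set.mem_univ 0) (Set.mem_univ t) ht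
    (line_hasDerivAt f hf x w 0)
  rw [slope_def_field, le_div_iff₀ (by linarith)] at h
  simp only [zero_smul, add_zero, sub_zero] at h
  linarith

theorem stmt_9 (d : ℕ) (hd : 1 ≤ d)
    (f₁ f₂ h₁ h₂ : EuclideanSpace ℝ (Fin d) → ℝ) (L : ℝ) (hL : 0 < L)
    (hf₁ : Differentiable ℝ f₁)
    (hlip : ∀ x y : EuclideanSpace ℝ (Fin d),
      ‖gradient f₁ x - gradient f₁ y‖ ≤ L * ‖x - y‖)
    (hf₂c : ConvexOn ℝ Set.univ f₂) (hf₂ : Differentiable ℝ f₂)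
    (hh₁ : ConvexOn ℝ Set.univ h₁) (hh₂ : ConvexOn ℝ Set.univ h₂)
    (F : EuclideanSpace ℝ (Fin d) → ℝ)
    (hF : ∀ x, F x = f₁ x - f₂ x + h₁ x - h₂ x)
    (H : EuclideanSpace ℝ (Fin d) →ₗ[ℝ] EuclideanSpace ℝ (Fin d))
    (hsym : ∀ u w : EuclideanSpace ℝ (Fin d), ⟪H u, w⟫ = ⟪u, H w⟫)
    (m : ℝ) (hm : 0 < m)
    (hHm : ∀ u : EuclideanSpace ℝ (Fin d), ⟪H u, u⟫ ≥ m * ‖u‖ ^ 2)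
    (x zh₂ : EuclideanSpace ℝ (Fin d))
    (hzh₂ : ∀ y, h₂ y ≥ h₂ x + ⟪zh₂, y - x⟫)
    (v : EuclideanSpace ℝ (Fin d))
    (hv : v = gradient f₁ x - gradient f₂ x - zh₂)
    (Δx : EuclideanSpace ℝ (Fin d))
    (hmin : ∀ dd : EuclideanSpace ℝ (Fin d),
      ⟪v, Δx⟫ + (1/2) * ⟪H Δx, Δx⟫ + h₁ (x + Δx)
        ≤ ⟪v, dd⟫ + (1/2) * ⟪H dd, dd⟫ + h₁ (x + dd))
    (D : ℝ) (hD : D = ⟪v, Δx⟫ + h₁ (x + Δx) - h₁ x) :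
    ∀ α : ℝ, α ∈ Set.Ioo (0:ℝ) 1 →
      ∀ t : ℝ, 0 < t → t ≤ min 1 (2 * m * (1 - α) / L) →
        F (x + t • Δx) - F x ≤ α * t * D := by
  intro α hα t ht htm
  have ht1 := htm.trans (min_le_left _ _)
  have ht2 := htm.trans (min_le_right _ _)
  rw [le_div_iff₀ hL] at ht2
  have hconv : ∀ s : ℝ, 0 ≤ s → s ≤ 1 →
      h₁ (x + s • Δx) ≤ (1 - s) * h₁ x + s * h₁ (x + Δx) := by
    intro s hs0 hs1
    have := hh₁.2 (Set.mem_univ x) (Set.mem_univ (x + Δx)) (sub_nonneg.2 hs1) hs0 (by ring)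
    have e : (1 - s) • x + s • (x + Δx) = x + s • Δx := by module
    rw [e] at this
    simpa using this
  have hq := hHm Δx
  have hn := sq_nonneg ‖Δx‖
  have key : ∀ s : ℝ, 0 ≤ s → s < 1 → D + (1 + s) / 2 * ⟪H Δx, Δx⟫ ≤ 0 := by
    intro s hs0 hs1
    have h1 := hmin (s • Δx)
    have h2 := hconv s hs0 hs1.le
    simp only [map_smul, inner_smul_left, inner_smul_right, conj_trivial] at h1
    have : (1 - s) * (D + (1 + s) / 2 * ⟪H Δx, Δx⟫) ≤ 0 := by
      rw [hD]; nlinarith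
    by_contra hcon
    push Not at hcon
    have := mul_pos (sub_pos.2 hs1) hcon
    linarith
  have hDq : D + ⟪H Δx, Δx⟫ ≤ 0 := by
    generalize ⟪H Δx, Δx⟫ = q at *
    by_contra hcon
    push Not at hcon
    have hq0 : 0 ≤ q := le_trans (by positivity) hq
    have k0 := key 0 le_rfl one_pos
    have hqp : 0 < q := by linarith
    have k1 := key (1 - (D + q) / q)
      (by rw [sub_nonneg, div_le_one hqp]; linarith)
      (by have := div_pos hcon hqp; linarith)
    have e : D + (1 + (1 - (D + q) / q)) / 2 * q = (D + q) / 2 := by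
      field_simp
      ring
    rw [e] at k1
    linarith
  have a1 := descent_aux f₁ hf₁ L hlip x Δx t ht
  have a2 := convex_aux f₂ hf₂ hf₂c x Δx t ht
  have a3 := hconv t ht.le ht1
  have a4 := hzh₂ (x + t • Δx)
  rw [add_sub_cancel_left, inner_smul_right] at a4
  have a5 : F (x + t • Δx) - F x ≤ t * D + L * t ^ 2 / 2 * ‖Δx‖ ^ 2 := by
    rw [hF, hF, hD, hv, inner_sub_left, inner_sub_left]
    linarith
  have a6 : D ≤ -(m * ‖Δx‖ ^ 2) := by linarith
  have a7 := mul_le_mul_of_nonneg_left a6 (mul_pos ht (sub_pos.2 hα.2)).le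
  have a8 := mul_le_mul_of_nonneg_left ht2 (mul_nonneg ht.le hn)
  linarith
end

section
/- (Vanishing of search directions along the algorithm.) Let f₁, f₂ : ℝ^d → ℝ be continuously differentiable convex functions and h₁, h₂ : ℝ^d → ℝ convex, with F = f₁ − f₂ + h₁ − h₂ bounded below on ℝ^d. Let m > 0, α ∈ (0, 1), t̲ ∈ (0, 1], and suppose given sequences: points x_k ∈ ℝ^d; symmetric positive definite linear maps H_k with ⟨H_k u, u⟩ ≥ m‖u‖² for all u; subgradients z_{h₂,k} ∈ ∂h₂(x_k); search directions Δx_k minimizing d ↦ ⟨v_k, d⟩ + ½⟨H_k d, d⟩ + h₁(x_k + d) where v_k = ∇f₁(x_k) − ∇f₂(x_k) − z_{h₂,k}; step sizes t_k ∈ [t̲, 1] with x_{k+1} = x_k + t_k Δx_k; and assume the sufficient descent condition F(x_{k+1}) − F(x_k) ≤ α·t_k·(⟨v_k, Δx_k⟩ + h₁(x_k + Δx_k) − h₁(x_k)) for all k. Then the sequence F(x_k) is nonincreasing and converges, ⟨H_k Δx_k, Δx_k⟩ → 0, and Δx_k → 0. -/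
open RealInnerProductSpace Filter

theorem stmt_10 (d : ℕ) (hd : 1 ≤ d)
    (f₁ f₂ h₁ h₂ : EuclideanSpace ℝ (Fin d) → ℝ)
    (hf₁ : ContDiff ℝ 1 f₁) (hf₂ : ContDiff ℝ 1 f₂)
    (hf₁c : ConvexOn ℝ Set.univ f₁) (hf₂c : ConvexOn ℝ Set.univ f₂)
    (hh₁ : ConvexOn ℝ Set.univ h₁) (hh₂ : ConvexOn ℝ Set.univ h₂)
    (F : EuclideanSpace ℝ (Fin d) → ℝ)
    (hF : ∀ x, F x = f₁ x - f₂ x + h₁ x - h₂ x)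
    (hbdd : ∃ B : ℝ, ∀ x, B ≤ F x)
    (m : ℝ) (hm : 0 < m) (α : ℝ) (hα : α ∈ Set.Ioo (0:ℝ) 1)
    (tlow : ℝ) (htlow : tlow ∈ Set.Ioc (0:ℝ) 1)
    (x : ℕ → EuclideanSpace ℝ (Fin d))
    (H : ℕ → (EuclideanSpace ℝ (Fin d) →ₗ[ℝ] EuclideanSpace ℝ (Fin d)))
    (hsym : ∀ k, ∀ u w : EuclideanSpace ℝ (Fin d), ⟪H k u, w⟫ = ⟪u, H k w⟫)
    (hpd : ∀ k, ∀ u : EuclideanSpace ℝ (Fin d), u ≠ 0 → 0 < ⟪H k u, u⟫)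
    (hHm : ∀ k, ∀ u : EuclideanSpace ℝ (Fin d), ⟪H k u, u⟫ ≥ m * ‖u‖ ^ 2)
    (zh₂ : ℕ → EuclideanSpace ℝ (Fin d))
    (hzh₂ : ∀ k, ∀ y, h₂ y ≥ h₂ (x k) + ⟪zh₂ k, y - x k⟫)
    (v : ℕ → EuclideanSpace ℝ (Fin d))
    (hv : ∀ k, v k = gradient f₁ (x k) - gradient f₂ (x k) - zh₂ k)
    (Δx : ℕ → EuclideanSpace ℝ (Fin d))
    (hmin : ∀ k, ∀ dd : EuclideanSpace ℝ (Fin d),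
      ⟪v k, Δx k⟫ + (1/2) * ⟪H k (Δx k), Δx k⟫ + h₁ (x k + Δx k)
        ≤ ⟪v k, dd⟫ + (1/2) * ⟪H k dd, dd⟫ + h₁ (x k + dd))
    (t : ℕ → ℝ) (ht : ∀ k, t k ∈ Set.Icc tlow 1)
    (hstep : ∀ k, x (k + 1) = x k + t k • Δx k)
    (hdesc : ∀ k, F (x (k + 1)) - F (x k)
      ≤ α * t k * (⟪v k, Δx k⟫ + h₁ (x k + Δx k) - h₁ (x k))) :
    Antitone (fun k => F (x k)) ∧
    (∃ ξ : ℝ, Tendsto (fun k => F (x k)) atTop (nhds ξ)) ∧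
    Tendsto (fun k => ⟪H k (Δx k), Δx k⟫) atTop (nhds 0) ∧
    Tendsto Δx atTop (nhds 0) := by
  obtain ⟨B, hB⟩ := hbdd
  obtain ⟨hα0, -⟩ := hα
  obtain ⟨ht0, -⟩ := htlow
  have hq : ∀ k, 0 ≤ ⟪H k (Δx k), Δx k⟫ := fun k =>
    le_trans (by positivity) (hHm k (Δx k))
  -- comparing with the zero direction
  have hlam : ∀ k, ⟪v k, Δx k⟫ + h₁ (x k + Δx k) - h₁ (x k)
      ≤ -(1/2 * ⟪H k (Δx k), Δx k⟫) := by
    intro k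
    have h := hmin k 0
    simp only [map_zero, inner_zero_right, add_zero, mul_zero, zero_add] at h
    linarith
  have hc : 0 < α * tlow / 2 := by positivity
  have hkey : ∀ k, (α * tlow / 2) * ⟪H k (Δx k), Δx k⟫ ≤ F (x k) - F (x (k + 1)) := by
    intro k
    have h1 := hdesc k
    have htk := (ht k).1
    have h2 := mul_le_mul_of_nonneg_left (hlam k)
      (mul_nonneg hα0.le (ht0.le.trans htk))
    have h3 := mul_le_mul_of_nonneg_right (mul_le_mul_of_nonneg_left htk hα0.le) (hq k)
    linarith
  have hanti : Antitone (fun k => F (x k)) := by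
    apply antitone_nat_of_succ_le
    intro k
    have h1 := hkey k
    have h2 := mul_nonneg hc.le (hq k)
    linarith
  have hconv : Tendsto (fun k => F (x k)) atTop (nhds (⨅ k, F (x k))) :=
    tendsto_atTop_ciInf hanti ⟨B, by rintro _ ⟨k, rfl⟩; exact hB _⟩
  have hdiff : Tendsto (fun k => (F (x k) - F (x (k + 1))) / (α * tlow / 2)) atTop (nhds 0) := by
    have h := (hconv.sub (hconv.comp (tendsto_add_atTop_nat 1))).div_const (α * tlow / 2)
    simpa using h
  have hH0 : Tendsto (fun k => ⟪H k (Δx k), Δx k⟫) atTop (nhds 0) := by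
    refine squeeze_zero hq (fun k => ?_) hdiff
    rw [le_div_iff₀ hc, mul_comm]
    exact hkey k
  refine ⟨hanti, ⟨_, hconv⟩, hH0, ?_⟩
  have hsq : Tendsto (fun k => ‖Δx k‖ ^ 2) atTop (nhds 0) := by
    have h := hH0.div_const m
    rw [zero_div] at h
    refine squeeze_zero (fun k => by positivity) (fun k => ?_) h
    rw [le_div_iff₀ hm, mul_comm]
    exact hHm k _
  rw [tendsto_zero_iff_norm_tendsto_zero]
  have h := hsq.sqrt
  simpa using h
end

section
/- (Proposition 1: limit points are stationary.) Let f₁, f₂ : ℝ^d → ℝ be continuously differentiable convex functions and h₁, h₂ : ℝ^d → ℝ convex, with F = f₁ − f₂ + h₁ − h₂ bounded below on ℝ^d. Let 0 < m ≤ M, α ∈ (0, 1), t̲ ∈ (0, 1], and suppose given sequences: points x_k ∈ ℝ^d; symmetric linear maps H_k with m‖u‖² ≤ ⟨H_k u, u⟩ and ‖H_k u‖ ≤ M‖u‖ for all u; subgradients z_{h₂,k} ∈ ∂h₂(x_k); search directions Δx_k minimizing d ↦ ⟨v_k, d⟩ + ½⟨H_k d, d⟩ + h₁(x_k + d) where v_k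 = ∇f₁(x_k) − ∇f₂(x_k) − z_{h₂,k}; step sizes t_k ∈ [t̲, 1] with x_{k+1} = x_k + t_k Δx_k; and assume F(x_{k+1}) − F(x_k) ≤ α·t_k·(⟨v_k, Δx_k⟩ + h₁(x_k + Δx_k) − h₁(x_k)) for all k. Then every limit point x⋆ of the sequence (x_k) is a stationary point of F, i.e., there exist z₁ ∈ ∂h₁(x⋆) and z₂ ∈ ∂h₂(x⋆) with ∇f₁(x⋆) − ∇f₂(x⋆) + z₁ − z₂ = 0. -/
open RealInnerProductSpace Filter

theorem aux_subgrad {E : Type*} [NormedAddCommGroup E] [InnerProductSpace ℝ E]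
    (h : E → ℝ) (hh : ConvexOn ℝ Set.univ h) (H : E →ₗ[ℝ] E)
    (hsym : ∀ u w : E, ⟪H u, w⟫ = ⟪u, H w⟫) (v x D : E)
    (hmin : ∀ dd : E, ⟪v, D⟫ + (1/2) * ⟪H D, D⟫ + h (x + D)
        ≤ ⟪v, dd⟫ + (1/2) * ⟪H dd, dd⟫ + h (x + dd)) (y : E) :
    h y ≥ h (x + D) + ⟪-(v + H D), y - (x + D)⟫ := by
  set u := y - (x + D) with hu
  have key : ∀ s : ℝ, 0 < s → s ≤ 1 →
      0 ≤ ⟪v, u⟫ + ⟪H D, u⟫ + s / 2 * ⟪H u, u⟫ + h y - h (x + D) := by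
    intro s hs hs1
    have h1 := hmin (D + s • u)
    have h2 := hh.2 (Set.mem_univ (x + D)) (Set.mem_univ y) (by linarith : 0 ≤ 1 - s) hs.le
      (by ring)
    have e : (1 - s) • (x + D) + s • y = x + (D + s • u) := by
      rw [hu]; module
    rw [e] at h2
    have e2 : ⟪H u, D⟫ = ⟪H D, u⟫ := by rw [hsym, real_inner_comm]
    simp only [map_add, map_smul, inner_add_left, inner_add_right, real_inner_smul_left,
      real_inner_smul_right, e2] at h1
    simp only [smul_eq_mul] at h2
    have : 0 ≤ s * (⟪v, u⟫ + ⟪H D, u⟫ + s / 2 * ⟪H u, u⟫ + h y - h (x + D)) := by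
      nlinarith
    exact nonneg_of_mul_nonneg_right this hs
  have lim : Tendsto (fun s : ℝ => ⟪v, u⟫ + ⟪H D, u⟫ + s / 2 * ⟪H u, u⟫ + h y - h (x + D))
      (nhdsWithin 0 (Set.Ioi 0))
      (nhds (⟪v, u⟫ + ⟪H D, u⟫ + 0 / 2 * ⟪H u, u⟫ + h y - h (x + D))) := by
    apply Tendsto.mono_left _ nhdsWithin_le_nhds
    apply Continuous.tendsto
    fun_prop
  have := ge_of_tendsto lim (by
    filter_upwards [Ioc_mem_nhdsGT (zero_lt_one' ℝ)] with s hs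
    exact key s hs.1 hs.2)
  rw [inner_neg_left, inner_add_left]
  linarith

theorem aux_bdd {d : ℕ} (h : EuclideanSpace ℝ (Fin d) → ℝ) (hc : Continuous h)
    (p : EuclideanSpace ℝ (Fin d)) :
    ∃ C : ℝ, ∀ x z : EuclideanSpace ℝ (Fin d), x ∈ Metric.ball p 1 →
      (∀ y, h y ≥ h x + ⟪z, y - x⟫) → ‖z‖ ≤ C := by
  obtain ⟨C, hC⟩ := (isCompact_closedBall p 2).exists_bound_of_continuousOn hc.continuousOn
  refine ⟨2 * C, fun x z hx hz => ?_⟩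
  rw [Metric.mem_ball, dist_eq_norm] at hx
  have b1 := hC x (by rw [Metric.mem_closedBall, dist_eq_norm]; linarith)
  have hC0 := (norm_nonneg _).trans b1
  rcases eq_or_ne z 0 with rfl | h0
  · simp; linarith
  have hn : ‖z‖ ≠ 0 := norm_ne_zero_iff.mpr h0
  have hu : ‖(‖z‖⁻¹ • z)‖ = 1 := by
    rw [norm_smul, norm_inv, norm_norm, inv_mul_cancel₀ hn]
  have b2 := hC (x + ‖z‖⁻¹ • z) (by
    rw [Metric.mem_closedBall, dist_eq_norm, add_sub_right_comm]
    have := norm_add_le (x - p) (‖z‖⁻¹ • z)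
    linarith)
  have := hz (x + ‖z‖⁻¹ • z)
  rw [add_sub_cancel_left, real_inner_smul_right, real_inner_self_eq_norm_sq, pow_two,
    inv_mul_cancel_left₀ hn] at this
  rw [Real.norm_eq_abs, abs_le] at b1 b2
  linarith

theorem aux_grad {d : ℕ} (f : EuclideanSpace ℝ (Fin d) → ℝ) (hf : ContDiff ℝ 1 f) :
    Continuous (gradient f) := by
  unfold gradient
  exact (LinearIsometryEquiv.continuous _).comp (hf.continuous_fderiv (by norm_num))

theorem stmt_11 (d : ℕ) (hd : 1 ≤ d)
    (f₁ f₂ h₁ h₂ : EuclideanSpace ℝ (Fin d) → ℝ)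
    (hf₁ : ContDiff ℝ 1 f₁) (hf₂ : ContDiff ℝ 1 f₂)
    (hf₁c : ConvexOn ℝ Set.univ f₁) (hf₂c : ConvexOn ℝ Set.univ f₂)
    (hh₁ : ConvexOn ℝ Set.univ h₁) (hh₂ : ConvexOn ℝ Set.univ h₂)
    (F : EuclideanSpace ℝ (Fin d) → ℝ)
    (hF : ∀ x, F x = f₁ x - f₂ x + h₁ x - h₂ x)
    (hbdd : ∃ B : ℝ, ∀ x, B ≤ F x)
    (m M : ℝ) (hm : 0 < m) (hmM : m ≤ M)
    (α : ℝ) (hα : α ∈ Set.Ioo (0:ℝ) 1)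
    (tlow : ℝ) (htlow : tlow ∈ Set.Ioc (0:ℝ) 1)
    (x : ℕ → EuclideanSpace ℝ (Fin d))
    (H : ℕ → (EuclideanSpace ℝ (Fin d) →ₗ[ℝ] EuclideanSpace ℝ (Fin d)))
    (hsym : ∀ k, ∀ u w : EuclideanSpace ℝ (Fin d), ⟪H k u, w⟫ = ⟪u, H k w⟫)
    (hHm : ∀ k, ∀ u : EuclideanSpace ℝ (Fin d), m * ‖u‖ ^ 2 ≤ ⟪H k u, u⟫)
    (hHM : ∀ k, ∀ u : EuclideanSpace ℝ (Fin d), ‖H k u‖ ≤ M * ‖u‖)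
    (zh₂ : ℕ → EuclideanSpace ℝ (Fin d))
    (hzh₂ : ∀ k, ∀ y, h₂ y ≥ h₂ (x k) + ⟪zh₂ k, y - x k⟫)
    (v : ℕ → EuclideanSpace ℝ (Fin d))
    (hv : ∀ k, v k = gradient f₁ (x k) - gradient f₂ (x k) - zh₂ k)
    (Δx : ℕ → EuclideanSpace ℝ (Fin d))
    (hmin : ∀ k, ∀ dd : EuclideanSpace ℝ (Fin d),
      ⟪v k, Δx k⟫ + (1/2) * ⟪H k (Δx k), Δx k⟫ + h₁ (x k + Δx k)
        ≤ ⟪v k, dd⟫ + (1/2) * ⟪H k dd, dd⟫ + h₁ (x k + dd))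
    (t : ℕ → ℝ) (ht : ∀ k, t k ∈ Set.Icc tlow 1)
    (hstep : ∀ k, x (k + 1) = x k + t k • Δx k)
    (hdesc : ∀ k, F (x (k + 1)) - F (x k)
      ≤ α * t k * (⟪v k, Δx k⟫ + h₁ (x k + Δx k) - h₁ (x k))) :
    ∀ xstar : EuclideanSpace ℝ (Fin d),
      (∃ φ : ℕ → ℕ, StrictMono φ ∧ Tendsto (x ∘ φ) atTop (nhds xstar)) →
      ∃ z₁ z₂ : EuclideanSpace ℝ (Fin d),
        (∀ y, h₁ y ≥ h₁ xstar + ⟪z₁, y - xstar⟫) ∧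
        (∀ y, h₂ y ≥ h₂ xstar + ⟪z₂, y - xstar⟫) ∧
        gradient f₁ xstar - gradient f₂ xstar + z₁ - z₂ = 0 := by
  rintro xs ⟨φ, hφ, hx⟩
  have c1 : Continuous h₁ := hh₁.locallyLipschitz.continuous
  have c2 : Continuous h₂ := hh₂.locallyLipschitz.continuous
  have sub := fun k => aux_subgrad h₁ hh₁ (H k) (hsym k) (v k) (x k) (Δx k) (hmin k)
  have pos : 0 < α * tlow * m := mul_pos (mul_pos hα.1 htlow.1) hm
  have dec : ∀ k, (α * tlow * m) * ‖Δx k‖ ^ 2 ≤ F (x k) - F (x (k + 1)) := by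
    intro k
    have s1 := sub k (x k)
    rw [sub_add_cancel_left, inner_neg_neg, inner_add_left] at s1
    have s2 := hHm k (Δx k)
    have s3 := hdesc k
    have s4 : ⟪v k, Δx k⟫ + h₁ (x k + Δx k) - h₁ (x k) ≤ -(m * ‖Δx k‖ ^ 2) := by linarith
    have ht0 : 0 < t k := htlow.1.trans_le (ht k).1
    have s5 := mul_le_mul_of_nonneg_left s4 (mul_pos hα.1 ht0).le
    have s6 : α * tlow * (m * ‖Δx k‖ ^ 2) ≤ α * t k * (m * ‖Δx k‖ ^ 2) := by
      have := hα.1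
      have := (ht k).1
      gcongr
    linarith
  have anti : Antitone (fun k => F (x k)) := antitone_nat_of_succ_le fun k => by
    have := dec k
    have : 0 ≤ (α * tlow * m) * ‖Δx k‖ ^ 2 := by positivity
    linarith
  obtain ⟨B, hB⟩ := hbdd
  have conv := tendsto_atTop_ciInf anti ⟨B, by rintro _ ⟨k, rfl⟩; exact hB _⟩
  have diff := conv.sub (conv.comp (tendsto_add_atTop_nat 1))
  rw [sub_self] at diff
  have sq : Tendsto (fun k => (α * tlow * m) * ‖Δx k‖ ^ 2) atTop (nhds 0) :=
    squeeze_zero (fun k => by positivity) dec diff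
  have sq2 : Tendsto (fun k => ‖Δx k‖) atTop (nhds 0) := by
    have := (sq.const_mul (α * tlow * m)⁻¹).sqrt
    simp only [inv_mul_cancel_left₀ pos.ne', Real.sqrt_sq (norm_nonneg _), mul_zero,
      Real.sqrt_zero] at this
    exact this
  have hΔ : Tendsto Δx atTop (nhds 0) := tendsto_zero_iff_norm_tendsto_zero.mpr sq2
  have hHΔ : Tendsto (fun k => H k (Δx k)) atTop (nhds 0) := by
    refine squeeze_zero_norm (fun k => hHM k (Δx k)) ?_
    simpa using sq2.const_mul M
  obtain ⟨C, hC⟩ := aux_bdd h₂ c2 xs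
  have ev : ∀ᶠ k in atTop, zh₂ (φ k) ∈ Metric.closedBall 0 C := by
    filter_upwards [hx (Metric.ball_mem_nhds xs one_pos)] with k hk
    rw [mem_closedBall_zero_iff]
    exact hC _ _ hk (hzh₂ (φ k))
  obtain ⟨z, -, ψ, hψ, hz⟩ :=
    tendsto_subseq_of_frequently_bounded Metric.isBounded_closedBall ev.frequently
  have hφψ : Tendsto (φ ∘ ψ) atTop atTop := hφ.tendsto_atTop.comp hψ.tendsto_atTop
  have hx' : Tendsto (fun k => x (φ (ψ k))) atTop (nhds xs) := hx.comp hψ.tendsto_atTop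
  have hz' : Tendsto (fun k => zh₂ (φ (ψ k))) atTop (nhds z) := hz
  have hΔ' : Tendsto (fun k => Δx (φ (ψ k))) atTop (nhds 0) := hΔ.comp hφψ
  have hHΔ' : Tendsto (fun k => H (φ (ψ k)) (Δx (φ (ψ k)))) atTop (nhds 0) := hHΔ.comp hφψ
  have g1 := ((aux_grad f₁ hf₁).tendsto xs).comp hx'
  have g2 := ((aux_grad f₂ hf₂).tendsto xs).comp hx'
  have hv' : Tendsto (fun k => v (φ (ψ k))) atTop
      (nhds (gradient f₁ xs - gradient f₂ xs - z)) := by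
    simp only [hv]
    exact (g1.sub g2).sub hz'
  refine ⟨-(gradient f₁ xs - gradient f₂ xs - z), z, fun y => ?_, fun y => ?_, by abel⟩
  · have hp := hx'.add hΔ'
    have hw := (hv'.add hHΔ').neg
    rw [add_zero] at hp hw
    exact le_of_tendsto (((c1.tendsto xs).comp hp).add (hw.inner (tendsto_const_nhds.sub hp)))
      (Eventually.of_forall fun k => sub (φ (ψ k)) y)
  · exact le_of_tendsto (((c2.tendsto xs).comp hx').add (hz'.inner (tendsto_const_nhds.sub hx')))
      (Eventually.of_forall fun k => hzh₂ (φ (ψ k)) y)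
end

section
/- (Sufficient decrease property.) Let h₁ : ℝ^d → ℝ be convex, H a symmetric positive definite linear map with ⟨Hu, u⟩ ≥ m‖u‖² for all u (m > 0), α ∈ (0, 1), x, v ∈ ℝ^d, and let Δx be a minimizer over d ∈ ℝ^d of ⟨v, d⟩ + ½⟨H d, d⟩ + h₁(x + d). Let F : ℝ^d → ℝ, t ∈ (0, 1], x₊ = x + tΔx, and suppose F(x₊) − F(x) ≤ α·t·(⟨v, Δx⟩ + h₁(x + Δx) − h₁(x)). Then F(x₊) − F(x) ≤ −(α/t)·‖x₊ − x‖²_H ≤ −(αm/t)·‖x₊ − x‖² ≤ −αm·‖x₊ − x‖², where ‖u‖²_H = ⟨Hu, u⟩. -/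
open RealInnerProductSpace

theorem stmt_12 (d : ℕ) (hd : 1 ≤ d)
    (h₁ : EuclideanSpace ℝ (Fin d) → ℝ) (hh₁ : ConvexOn ℝ Set.univ h₁)
    (H : EuclideanSpace ℝ (Fin d) →ₗ[ℝ] EuclideanSpace ℝ (Fin d))
    (hsym : ∀ u w : EuclideanSpace ℝ (Fin d), ⟪H u, w⟫ = ⟪u, H w⟫)
    (hpd : ∀ u : EuclideanSpace ℝ (Fin d), u ≠ 0 → 0 < ⟪H u, u⟫)
    (m : ℝ) (hm : 0 < m)
    (hHm : ∀ u : EuclideanSpace ℝ (Fin d), ⟪H u, u⟫ ≥ m * ‖u‖ ^ 2)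
    (α : ℝ) (hα : α ∈ Set.Ioo (0:ℝ) 1)
    (x v : EuclideanSpace ℝ (Fin d))
    (Δx : EuclideanSpace ℝ (Fin d))
    (hmin : ∀ dd : EuclideanSpace ℝ (Fin d),
      ⟪v, Δx⟫ + (1/2) * ⟪H Δx, Δx⟫ + h₁ (x + Δx)
        ≤ ⟪v, dd⟫ + (1/2) * ⟪H dd, dd⟫ + h₁ (x + dd))
    (F : EuclideanSpace ℝ (Fin d) → ℝ)
    (t : ℝ) (ht : t ∈ Set.Ioc (0:ℝ) 1)
    (xplus : EuclideanSpace ℝ (Fin d)) (hxplus : xplus = x + t • Δx)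
    (hdesc : F xplus - F x ≤ α * t * (⟪v, Δx⟫ + h₁ (x + Δx) - h₁ x)) :
    F xplus - F x ≤ -(α / t) * ⟪H (xplus - x), xplus - x⟫ ∧
    -(α / t) * ⟪H (xplus - x), xplus - x⟫ ≤ -(α * m / t) * ‖xplus - x‖ ^ 2 ∧
    -(α * m / t) * ‖xplus - x‖ ^ 2 ≤ -(α * m) * ‖xplus - x‖ ^ 2 := by
  obtain ⟨ht0, ht1⟩ := ht
  obtain ⟨hα0, hα1⟩ := hα
  have hdiff : xplus - x = t • Δx := by rw [hxplus]; abel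
  have hQ0 : 0 ≤ ⟪H Δx, Δx⟫ := le_trans (by positivity) (hHm Δx)
  have key : ∀ e : ℝ, 0 < e → e ≤ 1 →
      (⟪v, Δx⟫ + h₁ (x + Δx) - h₁ x) + ⟪H Δx, Δx⟫ ≤ e * ⟪H Δx, Δx⟫ / 2 := by
    intro e he0 he1
    have h1 := hmin ((1 - e) • Δx)
    have h2 := hh₁.2 (Set.mem_univ x) (Set.mem_univ (x + Δx)) he0.le
      (by linarith : (0:ℝ) ≤ 1 - e) (by ring)
    have h3 : e • x + (1 - e) • (x + Δx) = x + (1 - e) • Δx := by module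
    rw [h3] at h2
    simp only [map_smul, real_inner_smul_left, real_inner_smul_right, smul_eq_mul] at h1 h2
    refine le_of_mul_le_mul_left ?_ he0
    linarith
  have hL : (⟪v, Δx⟫ + h₁ (x + Δx) - h₁ x) + ⟪H Δx, Δx⟫ ≤ 0 := by
    generalize (⟪v, Δx⟫ + h₁ (x + Δx) - h₁ x) + ⟪H Δx, Δx⟫ = D at key
    generalize ⟪H Δx, Δx⟫ = Q at key hQ0
    by_contra hD
    push Not at hD
    have hs : 0 < D + Q := by linarith
    have h := key (D / (D + Q)) (by positivity) (by rw [div_le_one hs]; linarith)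
    rw [div_mul_eq_mul_div, div_div, le_div_iff₀ (by positivity)] at h
    nlinarith [mul_pos hD hD, mul_nonneg hD.le hQ0]
  refine ⟨?_, ?_, ?_⟩
  · rw [hdiff]
    simp only [map_smul, real_inner_smul_left, real_inner_smul_right]
    have h4 : -(α / t) * (t * (t * ⟪H Δx, Δx⟫)) = α * t * (-⟪H Δx, Δx⟫) := by
      field_simp
    rw [h4]
    refine hdesc.trans ?_
    exact mul_le_mul_of_nonneg_left (by linarith) (by positivity)
  · have h5 := mul_le_mul_of_nonneg_left (hHm (xplus - x)) (by positivity : 0 ≤ α / t)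
    have h6 : α * m / t * ‖xplus - x‖ ^ 2 = α / t * (m * ‖xplus - x‖ ^ 2) := by ring
    linarith
  · have h7 : α * m ≤ α * m / t := by
      rw [le_div_iff₀ ht0]
      exact mul_le_of_le_one_right (by positivity) ht1
    have h8 := mul_le_mul_of_nonneg_right h7 (sq_nonneg ‖xplus - x‖)
    linarith
end

section
/- (Subgradient bound at the surrogate minimizer.) Let f₁, f₂ : ℝ^d → ℝ be differentiable with ∇f₁ being L₁-Lipschitz and ∇f₂ being L₂-Lipschitz, and let h₂ : ℝ^d → ℝ be convex with Lipschitz subgradients: ‖u − v‖ ≤ L_{h₂}‖x − y‖ whenever u ∈ ∂h₂(x) and v ∈ ∂h₂(y). Let H be a linear map with ‖Hu‖ ≤ M‖u‖ for all u. Suppose x_k, z_k ∈ ℝ^d, z_{h₁} ∈ ℝ^d, z_{h₂,x} ∈ ∂h₂(x_k) satisfy the optimality identity H(z_k − x_k) + ∇f₁(x_k) − ∇f₂(x_k) + z_{h₁} − z_{h₂,x} = 0. Then for every z_{h₂,z} ∈ ∂h₂(z_k), the vector z_F = ∇f₁(z_k) − ∇f₂(z_k) + z_{h₁} − z_{h₂,z}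 satisfies ‖z_F‖ ≤ (L₁ + L₂ + L_{h₂} + M)·‖z_k − x_k‖. -/
open RealInnerProductSpace

theorem stmt_15 (d : ℕ) (hd : 1 ≤ d)
    (f₁ f₂ h₂ : EuclideanSpace ℝ (Fin d) → ℝ)
    (hf₁ : Differentiable ℝ f₁) (hf₂ : Differentiable ℝ f₂)
    (L₁ L₂ Lh₂ M : ℝ)
    (hlip₁ : ∀ x y : EuclideanSpace ℝ (Fin d),
      ‖gradient f₁ x - gradient f₁ y‖ ≤ L₁ * ‖x - y‖)
    (hlip₂ : ∀ x y : EuclideanSpace ℝ (Fin d),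
      ‖gradient f₂ x - gradient f₂ y‖ ≤ L₂ * ‖x - y‖)
    (hh₂ : ConvexOn ℝ Set.univ h₂)
    (hliph₂ : ∀ x y u v : EuclideanSpace ℝ (Fin d),
      (∀ w, h₂ w ≥ h₂ x + ⟪u, w - x⟫) → (∀ w, h₂ w ≥ h₂ y + ⟪v, w - y⟫) →
      ‖u - v‖ ≤ Lh₂ * ‖x - y‖)
    (H : EuclideanSpace ℝ (Fin d) →ₗ[ℝ] EuclideanSpace ℝ (Fin d))
    (hHM : ∀ u : EuclideanSpace ℝ (Fin d), ‖H u‖ ≤ M * ‖u‖)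
    (xk zk zh₁ zh₂x : EuclideanSpace ℝ (Fin d))
    (hzh₂x : ∀ w, h₂ w ≥ h₂ xk + ⟪zh₂x, w - xk⟫)
    (hopt : H (zk - xk) + gradient f₁ xk - gradient f₂ xk + zh₁ - zh₂x = 0) :
    ∀ zh₂z : EuclideanSpace ℝ (Fin d),
      (∀ w, h₂ w ≥ h₂ zk + ⟪zh₂z, w - zk⟫) →
      ‖gradient f₁ zk - gradient f₂ zk + zh₁ - zh₂z‖
        ≤ (L₁ + L₂ + Lh₂ + M) * ‖zk - xk‖ := by
  intro zh₂z hz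
  have e : gradient f₁ zk - gradient f₂ zk + zh₁ - zh₂z
      = (gradient f₁ zk - gradient f₁ xk) - (gradient f₂ zk - gradient f₂ xk)
        - (zh₂z - zh₂x) - H (zk - xk) := by
    rw [← sub_eq_zero, ← hopt]
    abel
  rw [e]
  have h1 := hlip₁ zk xk
  have h2 := hlip₂ zk xk
  have h3 := hliph₂ zk xk zh₂z zh₂x hz hzh₂x
  have h4 := hHM (zk - xk)
  have t1 := norm_sub_le ((gradient f₁ zk - gradient f₁ xk) - (gradient f₂ zk - gradient f₂ xk)
        - (zh₂z - zh₂x)) (H (zk - xk))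
  have t2 := norm_sub_le ((gradient f₁ zk - gradient f₁ xk) - (gradient f₂ zk - gradient f₂ xk))
        (zh₂z - zh₂x)
  have t3 := norm_sub_le (gradient f₁ zk - gradient f₁ xk) (gradient f₂ zk - gradient f₂ xk)
  linarith
end

section
/- (DC decomposition of the smooth transductive loss.) Let τ > 0 and define g : ℝ → ℝ by g(u) = log(1 + exp(−u)); set g₁(u) = (g(u) − g(u + τ))/τ, g₂(u) = g₁(−u), T(u) = 1 − g₁(u) − g₂(u), T₁(u) = 1 + (g(u + τ) + g(−u + τ))/τ, and T₂(u) = (g(u) + g(−u))/τ. Then g is convex on ℝ, T₁ and T₂ are convex on ℝ, and T(u) = T₁(u) − T₂(u) for every u ∈ ℝ. -/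
theorem stmt_17 (τ : ℝ) (hτ : 0 < τ)
    (g g₁ g₂ T T₁ T₂ : ℝ → ℝ)
    (hg : ∀ u, g u = Real.log (1 + Real.exp (-u)))
    (hg₁ : ∀ u, g₁ u = (g u - g (u + τ)) / τ)
    (hg₂ : ∀ u, g₂ u = g₁ (-u))
    (hT : ∀ u, T u = 1 - g₁ u - g₂ u)
    (hT₁ : ∀ u, T₁ u = 1 + (g (u + τ) + g (-u + τ)) / τ)
    (hT₂ : ∀ u, T₂ u = (g u + g (-u)) / τ) :
    ConvexOn ℝ Set.univ g ∧ ConvexOn ℝ Set.univ T₁ ∧ ConvexOn ℝ Set.univ T₂ ∧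
    ∀ u, T u = T₁ u - T₂ u := by
  have hd : ∀ u, HasDerivAt g ((Real.exp (-u) * (-1)) / (1 + Real.exp (-u))) u := by
    intro u
    have hge : g = fun u => Real.log (1 + Real.exp (-u)) := funext hg
    rw [hge]
    exact (((hasDerivAt_neg u).exp).const_add 1).log (by positivity)
  have hc : ConvexOn ℝ Set.univ g := by
    apply Monotone.convexOn_univ_of_deriv (fun u => (hd u).differentiableAt)
    intro a b hab
    rw [(hd a).deriv, (hd b).deriv, div_le_div_iff₀ (by positivity) (by positivity)]
    have : Real.exp (-b) ≤ Real.exp (-a) := Real.exp_le_exp.mpr (by linarith)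
    nlinarith
  have key : ∀ c : ℝ, ConvexOn ℝ Set.univ (fun u => (g (u + c) + g (-u + c)) / τ) := by
    intro c
    refine ⟨convex_univ, ?_⟩
    intro x _ y _ a b ha hb hab
    have h1 := hc.2 (Set.mem_univ (x + c)) (Set.mem_univ (y + c)) ha hb hab
    have h2 := hc.2 (Set.mem_univ (-x + c)) (Set.mem_univ (-y + c)) ha hb hab
    simp only [smul_eq_mul] at h1 h2 ⊢
    have e1 : a * (x + c) + b * (y + c) = a * x + b * y + c := by linear_combination c * hab
    have e2 : a * (-x + c) + b * (-y + c) = -(a * x + b * y) + c := by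
      linear_combination c * hab
    rw [e1] at h1
    rw [e2] at h2
    rw [← mul_div_assoc, ← mul_div_assoc, ← add_div]
    apply div_le_div_of_nonneg_right _ hτ.le
    linarith
  refine ⟨hc, ?_, ?_, ?_⟩
  · have : T₁ = (fun _ => (1 : ℝ)) + fun u => (g (u + τ) + g (-u + τ)) / τ := funext hT₁
    rw [this]
    exact (convexOn_const 1 convex_univ).add (key τ)
  · have : T₂ = fun u => (g (u + 0) + g (-u + 0)) / τ := by
      funext u
      simp [hT₂]
    rw [this]
    exact key 0
  · intro u
    rw [hT, hT₁, hT₂, hg₂, hg₁, hg₁]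
    ring
end
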